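/- arXiv:1310.3542 — 9 statements merged into one kernel-verified Lean document; each statement's English description precedes it below -/
import Mathlib

section
/- Let (X, 𝒜, μ) be a σ-finite measure space, w : X → ℂ an 𝒜-measurable function and φ : X → X an 𝒜-measurable transformation. Then the following conditions are equivalent: (i) the weighted composition operator C_{φ,w} is well defined on L²(μ), i.e., for every 𝒜-measurable f : X → ℂ with f = 0 a.e. [μ] one has w·(f∘φ) = 0 a.e. [μ]; (ii) μ^w ∘ φ⁻¹ ≪ μ; (iii) μ_w ∘ φ⁻¹ ≪ μ. -/
open MeasureTheory Set
open scoped ENNReal NNReal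

/-!
All three conditions say the same thing: `μ ({w ≠ 0} ∩ φ ⁻¹' s) = 0` for every measurable `μ`-null
set `s`. For the two absolute continuity conditions this holds because `μ^w` and `μ_w` have the same
null sets (`map_withDensity_ac_iff`). For well-definedness, test on indicator functions in one
direction, and take `s = {f ≠ 0}` in the other, since `w * (f ∘ φ)` is nonzero exactly on
`{w ≠ 0} ∩ φ ⁻¹' {f ≠ 0}`.
-/

theorem map_restrict_ac_iff {X : Type*} [MeasurableSpace X] (μ : Measure X)
    (w : X → ℂ) (φ : X → X) (hφ : Measurable φ) :
    Measure.map φ (μ.restrict {x | w x ≠ 0}) ≪ μ ↔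
      ∀ s, MeasurableSet s → μ s = 0 → μ ({x | w x ≠ 0} ∩ φ ⁻¹' s) = 0 := by
  have key : ∀ s, MeasurableSet s → Measure.map φ (μ.restrict {x | w x ≠ 0}) s =
      μ ({x | w x ≠ 0} ∩ φ ⁻¹' s) := fun s hs => by
    rw [Measure.map_apply hφ hs, Measure.restrict_apply (hφ hs), inter_comm]
  constructor
  · intro h s hs h0
    rw [← key s hs]
    exact h h0
  · intro h
    refine Measure.AbsolutelyContinuous.mk fun s hs h0 => ?_
    rw [key s hs]
    exact h s hs h0

theorem map_withDensity_ac_iff {X : Type*} [MeasurableSpace X] (μ : Measure X)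
    (w : X → ℂ) (φ : X → X) (hw : Measurable w) (hφ : Measurable φ) :
    Measure.map φ (μ.withDensity fun x => (‖w x‖₊ : ℝ≥0∞) ^ 2) ≪ μ ↔
      ∀ s, MeasurableSet s → μ s = 0 → μ ({x | w x ≠ 0} ∩ φ ⁻¹' s) = 0 := by
  have key : ∀ s, MeasurableSet s →
      (Measure.map φ (μ.withDensity fun x => (‖w x‖₊ : ℝ≥0∞) ^ 2) s = 0 ↔
        μ ({x | w x ≠ 0} ∩ φ ⁻¹' s) = 0) := fun s hs => by
    rw [Measure.map_apply hφ hs, withDensity_apply_eq_zero (by fun_prop)]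
    simp
  constructor
  · intro h s hs h0
    exact (key s hs).1 (h h0)
  · intro h
    exact Measure.AbsolutelyContinuous.mk fun s hs h0 => (key s hs).2 (h s hs h0)

theorem well_defined_iff_null {X : Type*} [MeasurableSpace X] (μ : Measure X)
    (w : X → ℂ) (φ : X → X) :
    (∀ f : X → ℂ, Measurable f → f =ᵐ[μ] 0 → (fun x => w x * f (φ x)) =ᵐ[μ] 0) ↔
      ∀ s, MeasurableSet s → μ s = 0 → μ ({x | w x ≠ 0} ∩ φ ⁻¹' s) = 0 := by
  constructor
  · intro h s hs h0
    have h1 := h (s.indicator 1) (measurable_one.indicator hs)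
      (indicator_meas_zero h0)
    refine measure_mono_null ?_ (ae_iff.1 h1)
    rintro x ⟨hx, hxs⟩
    have hxs' : φ x ∈ s := hxs
    simpa [hxs'] using hx
  · intro h f hf h0
    have h1 := h {y | f y ≠ 0} (hf (measurableSet_singleton 0).compl) (ae_iff.1 h0)
    refine ae_iff.2 (measure_mono_null ?_ h1)
    intro x hx
    exact mul_ne_zero_iff.1 hx

/-- Equivalence of well-definedness of the weighted composition operator
`C_{φ,w}` with the absolute continuity conditions `μ^w ∘ φ⁻¹ ≪ μ` and `μ_w ∘ φ⁻¹ ≪ μ`. -/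
theorem wco_well_defined_iff
    {X : Type*} [MeasurableSpace X] (μ : Measure X) [SigmaFinite μ]
    (w : X → ℂ) (φ : X → X) (hw : Measurable w) (hφ : Measurable φ) :
    ((∀ f : X → ℂ, Measurable f → f =ᵐ[μ] 0 →
        (fun x => w x * f (φ x)) =ᵐ[μ] 0) ↔
      Measure.map φ (μ.restrict {x | w x ≠ 0}) ≪ μ) ∧
    ((Measure.map φ (μ.restrict {x | w x ≠ 0}) ≪ μ) ↔
      Measure.map φ (μ.withDensity fun x => (‖w x‖₊ : ℝ≥0∞) ^ 2) ≪ μ) := by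
  rw [well_defined_iff_null, map_restrict_ac_iff μ w φ hφ, map_withDensity_ac_iff μ w φ hw hφ]
  exact ⟨Iff.rfl, Iff.rfl⟩
end

section
/- Suppose μ_w ∘ φ⁻¹ ≪ μ with Radon–Nikodym derivative h. Then: (i) h ∘ φ > 0 a.e. [μ_w]; (ii) if h < ∞ a.e. [μ], then for every 𝒜-measurable function f : X → [0,∞], ∫_X (f∘φ)/(h∘φ) dμ_w = ∫_{{h>0}} f dμ (with the conventions 1/0 = ∞ and 0·∞ = 0). -/
/-!
The hypothesis says that the push-forward of `μ_w` along `φ` is `μ.withDensity h`. Both claims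
are then statements about `h` alone. The set `{h = 0}` is null for `μ.withDensity h`, which
gives (i). For (ii), the change of variables along `φ` turns the left side into `∫ h * (f / h) ∂μ`,
and where `h < ∞` the integrand is the indicator of `{h > 0}` times `f`.
-/

open MeasureTheory Set
open scoped ENNReal NNReal

/-- (i) `h ∘ φ > 0` a.e. `[μ_w]`; (ii) if `h < ∞` a.e. `[μ]`, then
`∫ (f∘φ)/(h∘φ) dμ_w = ∫_{{h>0}} f dμ` for every measurable `f : X → [0,∞]`
(with the `ℝ≥0∞` conventions `1/0 = ∞`, `0·∞ = 0`). -/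
theorem wco_h_comp_pos_and_change_of_variables
    {X : Type*} [MeasurableSpace X] (μ : Measure X) [SigmaFinite μ]
    (w : X → ℂ) (φ : X → X) (hw : Measurable w) (hφ : Measurable φ)
    (h : X → ℝ≥0∞) (hh : Measurable h)
    (hrn : ∀ Δ : Set X, MeasurableSet Δ →
      (μ.withDensity fun x => (‖w x‖₊ : ℝ≥0∞) ^ 2) (φ ⁻¹' Δ) = ∫⁻ x in Δ, h x ∂μ) :
    (∀ᵐ x ∂(μ.withDensity fun x => (‖w x‖₊ : ℝ≥0∞) ^ 2), 0 < h (φ x)) ∧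
    ((∀ᵐ x ∂μ, h x < ⊤) → ∀ f : X → ℝ≥0∞, Measurable f →
      ∫⁻ x, f (φ x) / h (φ x) ∂(μ.withDensity fun x => (‖w x‖₊ : ℝ≥0∞) ^ 2)
        = ∫⁻ x in {x | 0 < h x}, f x ∂μ) := by
  have hmap : (μ.withDensity fun x => (‖w x‖₊ : ℝ≥0∞) ^ 2).map φ = μ.withDensity h := by
    ext Δ hΔ
    rw [Measure.map_apply hφ hΔ, hrn Δ hΔ, withDensity_apply _ hΔ]
  have hpos : MeasurableSet {x | 0 < h x} := measurableSet_lt measurable_const hh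
  refine ⟨?_, fun hfin f hf => ?_⟩
  · refine ae_of_ae_map hφ.aemeasurable (p := fun y => 0 < h y) ?_
    rw [hmap, ae_withDensity_iff hh]
    exact .of_forall fun x hx => pos_iff_ne_zero.mpr hx
  · have hq : Measurable fun y => f y / h y := hf.div hh
    rw [← lintegral_map (f := fun y => f y / h y) hq hφ, hmap,
      lintegral_withDensity_eq_lintegral_mul _ hh hq, ← lintegral_indicator hpos]
    refine lintegral_congr_ae ?_
    filter_upwards [hfin] with x hx
    by_cases h0 : h x = 0
    · simp [h0]
    · simp [pos_iff_ne_zero, h0, ENNReal.mul_div_cancel h0 hx.ne]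
end

section
/- Suppose μ_w ∘ φ⁻¹ ≪ μ with Radon–Nikodym derivative h. Then for all 𝒜-measurable functions f, g on X (either both [0,∞]-valued or both ℂ-valued): f∘φ = g∘φ a.e. [μ_w] if and only if χ_{{h>0}}·f = χ_{{h>0}}·g a.e. [μ]. -/
/-!
The Radon–Nikodym hypothesis says exactly that the push-forward of `μ_w` under `φ` is the measure
`h dμ`. Hence `f ∘ φ = g ∘ φ` a.e. `[μ_w]` means `f = g` a.e. `[h dμ]`, and the `h dμ`-null
sets are those whose intersection with `{h > 0}` is `μ`-null. Only measurability of the set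
`{f = g}` matters, so both cases of values follow from one lemma.
-/

open MeasureTheory Set
open scoped ENNReal NNReal

/-- The equivalence for a general target, with an arbitrary measure `ν` in the role of `μ_w`. -/
lemma comp_ae_eq_iff_indicator_ae_eq {X β : Type*} [MeasurableSpace X] [Zero β]
    {μ ν : Measure X} {φ : X → X} (hφ : Measurable φ) {h : X → ℝ≥0∞} (hh : Measurable h)
    (hrn : ∀ Δ : Set X, MeasurableSet Δ → ν (φ ⁻¹' Δ) = ∫⁻ x in Δ, h x ∂μ)
    {f g : X → β} (hfg : MeasurableSet {x | f x = g x}) :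
    ((fun x => f (φ x)) =ᵐ[ν] fun x => g (φ x)) ↔
      {x | 0 < h x}.indicator f =ᵐ[μ] {x | 0 < h x}.indicator g := by
  have hmap : ν.map φ = μ.withDensity h := by
    ext Δ hΔ
    rw [Measure.map_apply hφ hΔ, withDensity_apply _ hΔ, hrn Δ hΔ]
  have hpush : (∀ᵐ x ∂ν, f (φ x) = g (φ x)) ↔ ∀ᵐ x ∂μ, h x ≠ 0 → f x = g x := by
    rw [← ae_withDensity_iff hh, ← hmap, ae_map_iff hφ.aemeasurable hfg]
  refine hpush.trans (Filter.eventually_congr (.of_forall fun x => ?_))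
  by_cases hx : h x = 0 <;> simp [Set.indicator, hx, pos_iff_ne_zero]

/-- For measurable `f, g` (both `[0,∞]`-valued or both `ℂ`-valued):
`f∘φ = g∘φ` a.e. `[μ_w]` iff `χ_{{h>0}}·f = χ_{{h>0}}·g` a.e. `[μ]`. -/
theorem wco_comp_ae_eq_iff
    {X : Type*} [MeasurableSpace X] (μ : Measure X) [SigmaFinite μ]
    (w : X → ℂ) (φ : X → X) (hw : Measurable w) (hφ : Measurable φ)
    (h : X → ℝ≥0∞) (hh : Measurable h)
    (hrn : ∀ Δ : Set X, MeasurableSet Δ →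
      (μ.withDensity fun x => (‖w x‖₊ : ℝ≥0∞) ^ 2) (φ ⁻¹' Δ) = ∫⁻ x in Δ, h x ∂μ) :
    (∀ f g : X → ℝ≥0∞, Measurable f → Measurable g →
      (((fun x => f (φ x)) =ᵐ[μ.withDensity fun x => (‖w x‖₊ : ℝ≥0∞) ^ 2]
          fun x => g (φ x)) ↔
        ({x | 0 < h x}.indicator f =ᵐ[μ] {x | 0 < h x}.indicator g))) ∧
    (∀ f g : X → ℂ, Measurable f → Measurable g →
      (((fun x => f (φ x)) =ᵐ[μ.withDensity fun x => (‖w x‖₊ : ℝ≥0∞) ^ 2]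
          fun x => g (φ x)) ↔
        ({x | 0 < h x}.indicator f =ᵐ[μ] {x | 0 < h x}.indicator g))) := by
  exact ⟨fun f g hf hg => comp_ae_eq_iff_indicator_ae_eq hφ hh hrn (measurableSet_eq_fun hf hg),
    fun f g hf hg => comp_ae_eq_iff_indicator_ae_eq hφ hh hrn (measurableSet_eq_fun hf hg)⟩
end

section
/- Suppose μ_w ∘ φ⁻¹ ≪ μ with Radon–Nikodym derivative h, and let f be an 𝒜-measurable [0,∞]-valued (respectively ℂ-valued) function on X. Then there exists an 𝒜-measurable [0,∞]-valued (respectively ℂ-valued) function g on X such that f∘φ = g∘φ a.e. [μ_w] and g = 0 a.e. [μ] on {h = 0}; such a g is unique up to equality a.e. [μ], and is given by g = f·χ_{{h>0}}. -/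
open MeasureTheory Set
open scoped ENNReal NNReal

/-!
The identity defining `h` says that the pushforward of `μ_w` along `φ` is `h • μ`. Hence a
measurable property of `φ x` holds for `μ_w`-a.e. `x` exactly when it holds for `μ`-a.e. point of
`{h > 0}`. So `g ∘ φ = f ∘ φ` a.e. `[μ_w]` means `g = f` a.e. `[μ]` on `{h > 0}`; the values of
`g` on `{h = 0}` being prescribed as `0`, this says precisely that `g = f·χ_{{h>0}}` a.e. `[μ]`.
-/

/-- The result for a measure `ν` with `ν ∘ φ⁻¹ = h • μ` and functions valued in any measurable
space with a zero and measurable diagonal, which covers both `ℝ≥0∞` and `ℂ`. -/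
lemma truncation_aux {X M : Type*} [MeasurableSpace X] [MeasurableSpace M] [Zero M]
    [MeasurableEq M] {μ ν : Measure X} {φ : X → X} (hφ : Measurable φ)
    {h : X → ℝ≥0∞} (hh : Measurable h) (hmap : ν.map φ = μ.withDensity h)
    (f : X → M) (hf : Measurable f) :
    ((fun x => ({x | 0 < h x}.indicator f) (φ x)) =ᵐ[ν] fun x => f (φ x)) ∧
      (∀ᵐ x ∂μ, h x = 0 → ({x | 0 < h x}.indicator f) x = 0) ∧
      ∀ g : X → M, Measurable g → ((fun x => g (φ x)) =ᵐ[ν] fun x => f (φ x)) →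
        (∀ᵐ x ∂μ, h x = 0 → g x = 0) → g =ᵐ[μ] {x | 0 < h x}.indicator f := by
  refine ⟨?_, ?_, fun g hg hgf hg0 => ?_⟩
  · refine ae_of_ae_map (p := fun y => ({x | 0 < h x}.indicator f) y = f y) hφ.aemeasurable ?_
    rw [hmap, ae_withDensity_iff hh]
    exact ae_of_all _ fun y hy =>
      indicator_of_mem (show y ∈ {x | 0 < h x} from pos_iff_ne_zero.2 hy) f
  · exact ae_of_all _ fun x hx => indicator_of_notMem (by simp [hx]) f
  · have key : ∀ᵐ y ∂(ν.map φ), g y = f y :=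
      (ae_map_iff hφ.aemeasurable (measurableSet_eq_fun hg hf)).2 hgf
    rw [hmap, ae_withDensity_iff hh] at key
    filter_upwards [key, hg0] with x hx hx0
    by_cases h0 : h x = 0
    · rw [hx0 h0, indicator_of_notMem (by simp [h0])]
    · rw [hx h0, indicator_of_mem (show x ∈ {x | 0 < h x} from pos_iff_ne_zero.2 h0)]

/-- For measurable `f` ( `[0,∞]`-valued, resp. `ℂ`-valued) the function
`g = f·χ_{{h>0}}` satisfies `f∘φ = g∘φ` a.e. `[μ_w]` and `g = 0` a.e. `[μ]` on `{h = 0}`,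
and it is the unique (up to `μ`-a.e. equality) measurable function with these properties. -/
theorem wco_truncation_exists_unique
    {X : Type*} [MeasurableSpace X] (μ : Measure X) [SigmaFinite μ]
    (w : X → ℂ) (φ : X → X) (hw : Measurable w) (hφ : Measurable φ)
    (h : X → ℝ≥0∞) (hh : Measurable h)
    (hrn : ∀ Δ : Set X, MeasurableSet Δ →
      (μ.withDensity fun x => (‖w x‖₊ : ℝ≥0∞) ^ 2) (φ ⁻¹' Δ) = ∫⁻ x in Δ, h x ∂μ) :
    (∀ f : X → ℝ≥0∞, Measurable f →
      (((fun x => ({x | 0 < h x}.indicator f) (φ x))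
          =ᵐ[μ.withDensity fun x => (‖w x‖₊ : ℝ≥0∞) ^ 2] fun x => f (φ x)) ∧
        (∀ᵐ x ∂μ, h x = 0 → ({x | 0 < h x}.indicator f) x = 0) ∧
        ∀ g : X → ℝ≥0∞, Measurable g →
          ((fun x => g (φ x)) =ᵐ[μ.withDensity fun x => (‖w x‖₊ : ℝ≥0∞) ^ 2]
            fun x => f (φ x)) →
          (∀ᵐ x ∂μ, h x = 0 → g x = 0) → g =ᵐ[μ] {x | 0 < h x}.indicator f)) ∧
    (∀ f : X → ℂ, Measurable f →
      (((fun x => ({x | 0 < h x}.indicator f) (φ x))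
          =ᵐ[μ.withDensity fun x => (‖w x‖₊ : ℝ≥0∞) ^ 2] fun x => f (φ x)) ∧
        (∀ᵐ x ∂μ, h x = 0 → ({x | 0 < h x}.indicator f) x = 0) ∧
        ∀ g : X → ℂ, Measurable g →
          ((fun x => g (φ x)) =ᵐ[μ.withDensity fun x => (‖w x‖₊ : ℝ≥0∞) ^ 2]
            fun x => f (φ x)) →
          (∀ᵐ x ∂μ, h x = 0 → g x = 0) → g =ᵐ[μ] {x | 0 < h x}.indicator f)) := by
  have hmap : (μ.withDensity fun x => (‖w x‖₊ : ℝ≥0∞) ^ 2).map φ = μ.withDensity h := by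
    ext Δ hΔ
    rw [Measure.map_apply hφ hΔ, hrn Δ hΔ, withDensity_apply _ hΔ]
  exact ⟨truncation_aux hφ hh hmap, truncation_aux hφ hh hmap⟩
end

section
/- Suppose μ_w ∘ φ⁻¹ ≪ μ with Radon–Nikodym derivative h and h < ∞ a.e. [μ]. Then μ^w ∘ φ⁻¹ ≪ μ, and there exists an 𝒜-measurable function g : X → [0,∞] with g = 0 a.e. [μ] on {h = 0} such that μ^w(φ⁻¹(Δ)) = ∫_Δ g·h dμ for every Δ ∈ 𝒜; that is, the Radon–Nikodym derivative of μ^w ∘ φ⁻¹ with respect to μ equals h·g a.e. [μ], where g is (a version of) E_{φ,w}(χ_{{w≠0}}·|w|⁻²)∘φ⁻¹. -/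
/-!
The idea is to differentiate `ν = μ^w ∘ φ⁻¹` with respect to `m = μ_w ∘ φ⁻¹ = h • μ`, rather than
with respect to `μ` directly. Since `|w|² > 0` on `{w ≠ 0}`, an `m`-null set is `ν`-null, so `ν ≪ m`.
The measure `m` is σ-finite because `h < ∞` a.e., whereas `ν`, a push-forward of a σ-finite measure,
is only s-finite; this is still enough for the Radon–Nikodym theorem, and `ν = (dν/dm) • m` follows
with a derivative that may take the value `∞`. Then `dν/dμ = (dν/dm) * h`, and setting `dν/dm` to
zero on the `m`-null set `{h = 0}` yields `g`.
-/


open MeasureTheory Set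
open scoped ENNReal NNReal

/-- If `h < ∞` a.e. `[μ]`, then `μ^w ∘ φ⁻¹ ≪ μ` and its
Radon–Nikodym derivative equals `h·g` a.e. `[μ]`, where `g` vanishes a.e. on `{h = 0}`
(`g` is a version of `E_{φ,w}(χ_{{w≠0}}·|w|⁻²)∘φ⁻¹`). -/
theorem wco_rnDeriv_restrict
    {X : Type*} [MeasurableSpace X] (μ : Measure X) [SigmaFinite μ]
    (w : X → ℂ) (φ : X → X) (hw : Measurable w) (hφ : Measurable φ)
    (h : X → ℝ≥0∞) (hh : Measurable h)
    (hrn : ∀ Δ : Set X, MeasurableSet Δ →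
      (μ.withDensity fun x => (‖w x‖₊ : ℝ≥0∞) ^ 2) (φ ⁻¹' Δ) = ∫⁻ x in Δ, h x ∂μ)
    (hfin : ∀ᵐ x ∂μ, h x < ⊤) :
    Measure.map φ (μ.restrict {x | w x ≠ 0}) ≪ μ ∧
    ∃ g : X → ℝ≥0∞, Measurable g ∧ (∀ᵐ x ∂μ, h x = 0 → g x = 0) ∧
      ∀ Δ : Set X, MeasurableSet Δ →
        (μ.restrict {x | w x ≠ 0}) (φ ⁻¹' Δ) = ∫⁻ x in Δ, g x * h x ∂μ := by
  set ν := Measure.map φ (μ.restrict {x | w x ≠ 0}) with hν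
  set m := μ.withDensity h with hm
  have hwset : MeasurableSet {x | w x ≠ 0} := hw (measurableSet_singleton 0).compl
  have hνm : ν ≪ m := by
    refine Measure.AbsolutelyContinuous.mk fun Δ hΔ h0 => ?_
    rw [hm, withDensity_apply _ hΔ, ← hrn Δ hΔ,
      withDensity_apply_eq_zero (by fun_prop)] at h0
    rw [hν, Measure.map_apply hφ hΔ, Measure.restrict_apply (hφ hΔ), inter_comm]
    simpa using h0
  have hmμ : m ≪ μ := withDensity_absolutelyContinuous μ h
  have : SigmaFinite m :=
    SigmaFinite.withDensity_of_ne_top (hfin.mono fun x hx => hx.ne)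
  refine ⟨hνm.trans hmμ, {x | h x ≠ 0}.indicator (ν.rnDeriv m), ?_, ?_, ?_⟩
  · exact (Measure.measurable_rnDeriv ν m).indicator (hh (measurableSet_singleton 0).compl)
  · exact Filter.Eventually.of_forall fun x hx => by simp [hx]
  · intro Δ hΔ
    have hgh : (fun x => {x | h x ≠ 0}.indicator (ν.rnDeriv m) x * h x) = h * ν.rnDeriv m := by
      funext x
      by_cases hx : h x = 0 <;> simp [hx, mul_comm]
    rw [← Measure.map_apply hφ hΔ, ← hν, hgh, ← withDensity_apply _ hΔ,
      withDensity_mul μ hh (Measure.measurable_rnDeriv ν m), ← hm,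
      Measure.withDensity_rnDeriv_eq ν m hνm]
end

section
/- Suppose ρ_W ∘ Φ⁻¹ ≪ ρ. Then μ_w ∘ φ⁻¹ ≪ μ. Moreover, if the Radon–Nikodym derivative h of μ_w ∘ φ⁻¹ with respect to μ satisfies h < ∞ a.e. [μ], then the Radon–Nikodym derivative H of ρ_W ∘ Φ⁻¹ with respect to ρ satisfies H < ∞ a.e. [ρ], and for every Δ ∈ 𝒜 and every Borel set σ ⊆ [0,∞): ∫_Δ (∫_σ H(x,t) P(x,dt)) dμ(x) = ∫_{φ⁻¹(Δ)} P(x,σ) dμ_w(x). -/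
open MeasureTheory Set ProbabilityTheory
open scoped ENNReal NNReal

/-!
Since `W` and `Φ` act only on the first coordinate, a measurable rectangle satisfies
`(ρ_W ∘ Φ⁻¹)(Δ × σ) = ∫_{φ⁻¹(Δ)} P(x, σ) dμ_w(x)` (`map_withDensity_compProd_prod`).
With `σ = [0,∞)` the right-hand side is `μ_w(φ⁻¹(Δ))`, because `P` is Markov, and
`ρ(Δ × [0,∞)) = μ(Δ)`; this transfers absolute continuity from `ρ_W ∘ Φ⁻¹` to `μ_w ∘ φ⁻¹`.

Disintegrating `∫_{Δ × σ} H dρ` along `P` gives the integral formula. For `σ = [0,∞)` it says that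
`x ↦ ∫ H(x,t) P(x,dt)` and `h` have the same integral over every measurable `Δ`, so they agree
`μ`-a.e. by σ-finiteness. Finiteness of `h` then makes `H(x,·)` finite `P(x,·)`-a.e. for `μ`-almost
every `x`, which is finiteness of `H` a.e. with respect to `ρ`.
-/

lemma map_withDensity_compProd_prod
    {X T : Type*} [MeasurableSpace X] [MeasurableSpace T] (μ : Measure X) [SFinite μ]
    (f : X → ℝ≥0∞) (φ : X → X) (hf : Measurable f) (hφ : Measurable φ)
    (P : Kernel X T) [IsSFiniteKernel P] {Δ : Set X} {σ : Set T}
    (hΔ : MeasurableSet Δ) (hσ : MeasurableSet σ) :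
    (Measure.map (fun p : X × T => (φ p.1, p.2))
        ((μ.compProd P).withDensity fun p => f p.1)) (Δ ×ˢ σ)
      = ∫⁻ x in φ ⁻¹' Δ, (P x) σ ∂(μ.withDensity f) := by
  have hpre : (fun p : X × T => (φ p.1, p.2)) ⁻¹' (Δ ×ˢ σ) = (φ ⁻¹' Δ) ×ˢ σ := rfl
  rw [Measure.map_apply (by fun_prop) (hΔ.prod hσ), hpre,
    withDensity_apply _ ((hφ hΔ).prod hσ),
    Measure.setLIntegral_compProd (by fun_prop) (hφ hΔ) hσ,
    setLIntegral_withDensity_eq_setLIntegral_mul _ hf (P.measurable_coe hσ) (hφ hΔ)]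
  simp

/-- If `ρ_W ∘ Φ⁻¹ ≪ ρ`, then `μ_w ∘ φ⁻¹ ≪ μ`; moreover, if the
Radon–Nikodym derivative `h` of `μ_w ∘ φ⁻¹` is a.e. finite, then the Radon–Nikodym
derivative `H` of `ρ_W ∘ Φ⁻¹` is a.e. `[ρ]` finite and
`∫_Δ (∫_σ H(x,t) P(x,dt)) dμ(x) = ∫_{φ⁻¹(Δ)} P(x,σ) dμ_w(x)` for all `Δ ∈ 𝒜` and
Borel `σ ⊆ [0,∞)`. -/
theorem wco_extension_rnDeriv
    {X : Type*} [MeasurableSpace X] (μ : Measure X) [SigmaFinite μ]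
    (w : X → ℂ) (φ : X → X) (hw : Measurable w) (hφ : Measurable φ)
    (P : Kernel X ℝ≥0) [IsMarkovKernel P]
    (h : X → ℝ≥0∞) (hh : Measurable h)
    (H : X × ℝ≥0 → ℝ≥0∞) (hH : Measurable H)
    (habs : Measure.map (fun p : X × ℝ≥0 => (φ p.1, p.2))
        ((μ.compProd P).withDensity fun p => (‖w p.1‖₊ : ℝ≥0∞) ^ 2) ≪ μ.compProd P) :
    Measure.map φ (μ.withDensity fun x => (‖w x‖₊ : ℝ≥0∞) ^ 2) ≪ μ ∧
    ((∀ Δ : Set X, MeasurableSet Δ →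
        (μ.withDensity fun x => (‖w x‖₊ : ℝ≥0∞) ^ 2) (φ ⁻¹' Δ) = ∫⁻ x in Δ, h x ∂μ) →
      (∀ᵐ x ∂μ, h x < ⊤) →
      (∀ E : Set (X × ℝ≥0), MeasurableSet E →
        (Measure.map (fun p : X × ℝ≥0 => (φ p.1, p.2))
          ((μ.compProd P).withDensity fun p => (‖w p.1‖₊ : ℝ≥0∞) ^ 2)) E
          = ∫⁻ p in E, H p ∂(μ.compProd P)) →
      ((∀ᵐ p ∂(μ.compProd P), H p < ⊤) ∧
        ∀ (Δ : Set X) (σ : Set ℝ≥0), MeasurableSet Δ → MeasurableSet σ →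
          ∫⁻ x in Δ, (∫⁻ t in σ, H (x, t) ∂(P x)) ∂μ
            = ∫⁻ x in φ ⁻¹' Δ, (P x) σ
                ∂(μ.withDensity fun x => (‖w x‖₊ : ℝ≥0∞) ^ 2))) := by
  have hf : Measurable fun x => (‖w x‖₊ : ℝ≥0∞) ^ 2 := by fun_prop
  have key := fun (Δ : Set X) (σ : Set ℝ≥0) (hΔ : MeasurableSet Δ) (hσ : MeasurableSet σ) =>
    map_withDensity_compProd_prod μ _ φ hf hφ P hΔ hσ
  refine ⟨Measure.AbsolutelyContinuous.mk fun Δ hΔ h0 => ?_, fun hh_rn hh_fin hH_rn => ?_⟩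
  · have hρ : (μ.compProd P) (Δ ×ˢ univ) = 0 := by
      rw [Measure.compProd_apply_prod hΔ .univ]
      simp [h0]
    have hz := habs hρ
    rw [key Δ univ hΔ .univ] at hz
    rw [Measure.map_apply hφ hΔ]
    simpa using hz
  · have formula : ∀ (Δ : Set X) (σ : Set ℝ≥0), MeasurableSet Δ → MeasurableSet σ →
        ∫⁻ x in Δ, (∫⁻ t in σ, H (x, t) ∂(P x)) ∂μ
          = ∫⁻ x in φ ⁻¹' Δ, (P x) σ
              ∂(μ.withDensity fun x => (‖w x‖₊ : ℝ≥0∞) ^ 2) := by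
      intro Δ σ hΔ hσ
      rw [← key Δ σ hΔ hσ, hH_rn _ (hΔ.prod hσ), Measure.setLIntegral_compProd hH hΔ hσ]
    refine ⟨?_, formula⟩
    have heq : (fun x => ∫⁻ t, H (x, t) ∂(P x)) =ᵐ[μ] h := by
      refine ae_eq_of_forall_setLIntegral_eq_of_sigmaFinite hH.lintegral_kernel_prod_right' hh
        fun Δ hΔ _ => ?_
      rw [← hh_rn Δ hΔ]
      simpa using formula Δ univ hΔ .univ
    rw [Measure.ae_compProd_iff (measurableSet_lt hH measurable_const)]
    filter_upwards [heq, hh_fin] with x hx hx_fin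
    exact ae_lt_top (by fun_prop) (hx.trans_lt hx_fin).ne
end

section
/- Suppose μ_w ∘ φ⁻¹ ≪ μ with Radon–Nikodym derivative h, h < ∞ a.e. [μ], and the consistency condition (CC) holds. Then ρ_W ∘ Φ⁻¹ ≪ ρ and the Radon–Nikodym derivative H of ρ_W ∘ Φ⁻¹ with respect to ρ satisfies H(x,t) = χ_{{h>0}}(x)·t for ρ-a.e. (x,t) ∈ X × [0,∞). -/
/-!
Both sides of the density identity are measures on `X × ℝ≥0`, so it suffices to compare them on
measurable rectangles `Δ ×ˢ σ`. There the left side is `∫_{φ⁻¹ Δ} P(x, σ) dμ_w`, which (CC) turns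
into the integral over `φ⁻¹ Δ` of a function of `φ x`. Since `μ_w ∘ φ⁻¹ = h • μ`, a change of
variables gives `∫_Δ (E_σ / h) · h dμ` with `E_σ x = ∫_σ t P(x, dt)`, and
`(E_σ / h) · h = χ_{h > 0} E_σ` wherever `h < ∞` (`div_mul_eq_indicator`). Rectangles determine the
measure because the right side is finite on `S_n ×ˢ [0, n]` for `S_n` exhausting `X` with
`μ S_n < ∞`: there the density is at most `n`. Absolute continuity follows from the existence of a
density.
-/

open MeasureTheory Set ProbabilityTheory
open scoped ENNReal NNReal

/-- With the conventions of `ℝ≥0∞`, at `b = 0` the product vanishes even if `a / b = ∞`. -/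
lemma div_mul_eq_indicator (a b : ℝ≥0∞) (hb : b < ⊤) :
    a / b * b = if 0 < b then a else 0 := by
  split_ifs with h0
  · exact ENNReal.div_mul_cancel h0.ne' hb.ne
  · simp [le_zero_iff.mp (not_lt.mp h0)]

section Rectangles

variable {X : Type*} [MeasurableSpace X] (μ : Measure X) [SigmaFinite μ]
  (P : Kernel X ℝ≥0) [IsMarkovKernel P]

/-- The extended weighted measure, pushed forward by `(x, t) ↦ (φ x, t)`, on a rectangle. -/
lemma map_withDensity_compProd_rect (w : X → ℂ) (φ : X → X) (hw : Measurable w)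
    (hφ : Measurable φ) {Δ : Set X} (hΔ : MeasurableSet Δ) {σ : Set ℝ≥0} (hσ : MeasurableSet σ) :
    Measure.map (fun p : X × ℝ≥0 => (φ p.1, p.2))
        ((μ.compProd P).withDensity fun p => (‖w p.1‖₊ : ℝ≥0∞) ^ 2) (Δ ×ˢ σ)
      = ∫⁻ x in φ ⁻¹' Δ, (P x) σ ∂(μ.withDensity fun x => (‖w x‖₊ : ℝ≥0∞) ^ 2) := by
  have hpre : (fun p : X × ℝ≥0 => (φ p.1, p.2)) ⁻¹' (Δ ×ˢ σ) = (φ ⁻¹' Δ) ×ˢ σ := rfl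
  have hd : Measurable fun p : X × ℝ≥0 => (‖w p.1‖₊ : ℝ≥0∞) ^ 2 := by fun_prop
  rw [Measure.map_apply (by fun_prop) (hΔ.prod hσ), hpre,
    withDensity_apply _ ((hφ hΔ).prod hσ),
    Measure.setLIntegral_compProd hd (hφ hΔ) hσ,
    restrict_withDensity (hφ hΔ),
    lintegral_withDensity_eq_lintegral_mul _ (by fun_prop) (P.measurable_coe hσ)]
  simp

/-- The measure with density `χ_{h > 0}(x) t` on a rectangle. -/
lemma withDensity_compProd_rect (h : X → ℝ≥0∞) (hh : Measurable h)
    {Δ : Set X} (hΔ : MeasurableSet Δ) {σ : Set ℝ≥0} (hσ : MeasurableSet σ) :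
    (μ.compProd P).withDensity (fun p => if 0 < h p.1 then (p.2 : ℝ≥0∞) else 0) (Δ ×ˢ σ)
      = ∫⁻ x in Δ, (if 0 < h x then ∫⁻ t in σ, (t : ℝ≥0∞) ∂(P x) else 0) ∂μ := by
  have hd : Measurable fun p : X × ℝ≥0 => if 0 < h p.1 then (p.2 : ℝ≥0∞) else 0 :=
    Measurable.ite (measurableSet_lt measurable_const (by fun_prop)) (by fun_prop) (by fun_prop)
  rw [withDensity_apply _ (hΔ.prod hσ), Measure.setLIntegral_compProd hd hΔ hσ]
  refine lintegral_congr fun x => ?_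
  split_ifs <;> simp

end Rectangles

/-- Under the consistency condition (CC), `ρ_W ∘ Φ⁻¹ ≪ ρ` and the
Radon–Nikodym derivative of `ρ_W ∘ Φ⁻¹` with respect to `ρ` is
`H(x,t) = χ_{{h>0}}(x)·t`. -/
theorem wco_cc_extension_rnDeriv
    {X : Type*} [MeasurableSpace X] (μ : Measure X) [SigmaFinite μ]
    (w : X → ℂ) (φ : X → X) (hw : Measurable w) (hφ : Measurable φ)
    (P : Kernel X ℝ≥0) [IsMarkovKernel P]
    (h : X → ℝ≥0∞) (hh : Measurable h)
    (hrn : ∀ Δ : Set X, MeasurableSet Δ →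
      (μ.withDensity fun x => (‖w x‖₊ : ℝ≥0∞) ^ 2) (φ ⁻¹' Δ) = ∫⁻ x in Δ, h x ∂μ)
    (hfin : ∀ᵐ x ∂μ, h x < ⊤)
    (hCC : ∀ σ : Set ℝ≥0, MeasurableSet σ → ∀ Δ : Set X, MeasurableSet Δ →
      ∫⁻ x in φ ⁻¹' Δ, (P x) σ ∂(μ.withDensity fun x => (‖w x‖₊ : ℝ≥0∞) ^ 2)
        = ∫⁻ x in φ ⁻¹' Δ, (∫⁻ t in σ, (t : ℝ≥0∞) ∂(P (φ x))) / h (φ x)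
            ∂(μ.withDensity fun x => (‖w x‖₊ : ℝ≥0∞) ^ 2)) :
    Measure.map (fun p : X × ℝ≥0 => (φ p.1, p.2))
        ((μ.compProd P).withDensity fun p => (‖w p.1‖₊ : ℝ≥0∞) ^ 2) ≪ μ.compProd P ∧
    Measure.map (fun p : X × ℝ≥0 => (φ p.1, p.2))
        ((μ.compProd P).withDensity fun p => (‖w p.1‖₊ : ℝ≥0∞) ^ 2)
      = (μ.compProd P).withDensity
          (fun p => if 0 < h p.1 then (p.2 : ℝ≥0∞) else 0) := by
  have hmap : (μ.withDensity fun x => (‖w x‖₊ : ℝ≥0∞) ^ 2).map φ = μ.withDensity h := by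
    ext Δ hΔ
    rw [Measure.map_apply hφ hΔ, hrn Δ hΔ, withDensity_apply _ hΔ]
  have hrect : ∀ Δ : Set X, MeasurableSet Δ → ∀ σ : Set ℝ≥0, MeasurableSet σ →
      Measure.map (fun p : X × ℝ≥0 => (φ p.1, p.2))
        ((μ.compProd P).withDensity fun p => (‖w p.1‖₊ : ℝ≥0∞) ^ 2) (Δ ×ˢ σ)
      = (μ.compProd P).withDensity
          (fun p => if 0 < h p.1 then (p.2 : ℝ≥0∞) else 0) (Δ ×ˢ σ) := by
    intro Δ hΔ σ hσ
    have hE : Measurable fun x => ∫⁻ t in σ, (t : ℝ≥0∞) ∂(P x) :=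
      Measurable.setLIntegral_kernel (by fun_prop) hσ
    have hg : Measurable fun x => (∫⁻ t in σ, (t : ℝ≥0∞) ∂(P x)) / h x := hE.div hh
    rw [map_withDensity_compProd_rect μ P w φ hw hφ hΔ hσ,
      withDensity_compProd_rect μ P h hh hΔ hσ, hCC σ hσ Δ hΔ,
      ← setLIntegral_map hΔ hg hφ, hmap, restrict_withDensity hΔ,
      lintegral_withDensity_eq_lintegral_mul _ hh hg]
    refine lintegral_congr_ae ((ae_restrict_of_ae hfin).mono fun x hx => ?_)
    simp only [Pi.mul_apply]
    rw [mul_comm, div_mul_eq_indicator _ _ hx]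
  have heq : Measure.map (fun p : X × ℝ≥0 => (φ p.1, p.2))
        ((μ.compProd P).withDensity fun p => (‖w p.1‖₊ : ℝ≥0∞) ^ 2)
      = (μ.compProd P).withDensity
          (fun p => if 0 < h p.1 then (p.2 : ℝ≥0∞) else 0) := by
    refine Measure.ext_of_generateFrom_of_iUnion
      (image2 (· ×ˢ ·) {s : Set X | MeasurableSet s} {t : Set ℝ≥0 | MeasurableSet t})
      (fun n : ℕ => spanningSets μ n ×ˢ Iic (n : ℝ≥0)) generateFrom_prod.symm isPiSystem_prod
      ?_ ?_ ?_ ?_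
    · refine eq_univ_of_forall fun p => ?_
      obtain ⟨m, hm⟩ := exists_nat_ge p.2
      refine mem_iUnion.2 ⟨max (spanningSetsIndex μ p.1) m, ?_, ?_⟩
      · exact monotone_spanningSets μ (le_max_left _ _) (mem_spanningSetsIndex μ p.1)
      · exact hm.trans (by exact_mod_cast le_max_right _ _)
    · exact fun n => ⟨_, measurableSet_spanningSets μ n, _, (measurableSet_Iic : MeasurableSet (Iic (n : ℝ≥0))), rfl⟩
    · intro n
      rw [hrect _ (measurableSet_spanningSets μ n) _ measurableSet_Iic,
        withDensity_compProd_rect μ P h hh (measurableSet_spanningSets μ n) measurableSet_Iic]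
      refine ne_of_lt (lt_of_le_of_lt (b := ∫⁻ x in spanningSets μ n, (n : ℝ≥0∞) ∂μ) ?_ ?_)
      · refine lintegral_mono fun x => ?_
        split_ifs
        · calc ∫⁻ t in Iic (n : ℝ≥0), (t : ℝ≥0∞) ∂(P x)
              ≤ ∫⁻ t in Iic (n : ℝ≥0), (n : ℝ≥0∞) ∂(P x) :=
                setLIntegral_mono measurable_const fun t ht => by exact_mod_cast ht
            _ ≤ n := by
                rw [setLIntegral_const]
                exact mul_le_of_le_one_right' prob_le_one
        · exact zero_le
      · rw [setLIntegral_const]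
        exact ENNReal.mul_lt_top (by simp) (measure_spanningSets_lt_top μ n)
    · rintro _ ⟨Δ, hΔ, σ, hσ, rfl⟩
      exact hrect Δ hΔ σ hσ
  exact ⟨heq ▸ withDensity_absolutelyContinuous _ _, heq⟩
end

section
/- Suppose μ_w ∘ φ⁻¹ ≪ μ with Radon–Nikodym derivative h, h < ∞ a.e. [μ], and the consistency condition (CC) holds. Then the following conditions are equivalent: (iii) ∫_0^∞ t P(x,dt) = 0 for μ_w-a.e. x ∈ {h = 0}; (iv) P(x,·) = δ₀ for μ_w-a.e. x ∈ {h = 0}; (vii) h > 0 a.e. [μ_w]. -/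
/-!
The heart of the matter is (CC) with `σ = {0}` and `Δ = X`: the first moment over `{0}` vanishes and
`0 / h = 0` even where `h = 0`, so `P(x,{0}) = 0` for `μ_w`-a.e. `x`. Hence `P(x,·) = δ₀` can
only hold on a `μ_w`-null set, and `P(x,·) = δ₀` a.e. on `{h = 0}` forces `h > 0` a.e.
Moreover, a probability measure on `[0,∞)` with vanishing first moment is `δ₀`.
-/

open MeasureTheory Set ProbabilityTheory
open scoped ENNReal NNReal

/-- A probability measure on `[0,∞)` with vanishing first moment is the Dirac measure at `0`. -/
lemma eq_dirac_zero_of_lintegral_eq_zero (ν : Measure ℝ≥0) [IsProbabilityMeasure ν]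
    (hν : ∫⁻ t, (t : ℝ≥0∞) ∂ν = 0) : ν = Measure.dirac 0 := by
  have h0 : (fun t : ℝ≥0 => t) =ᵐ[ν] fun _ => 0 := by
    rw [lintegral_eq_zero_iff (by fun_prop)] at hν
    filter_upwards [hν] with t ht
    simpa using ht
  calc ν = ν.map (fun t => t) := Measure.map_id'.symm
    _ = ν.map (fun _ => 0) := Measure.map_congr h0
    _ = Measure.dirac 0 := by simp [Measure.map_const]

/-- Under the consistency condition (CC), the following are
equivalent: the first moment of `P(x,·)` vanishes for `μ_w`-a.e. `x ∈ {h = 0}`;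
`P(x,·) = δ₀` for `μ_w`-a.e. `x ∈ {h = 0}`; `h > 0` a.e. `[μ_w]`. -/
theorem wco_cc_positivity_tfae
    {X : Type*} [MeasurableSpace X] (μ : Measure X) [SigmaFinite μ]
    (w : X → ℂ) (φ : X → X) (hw : Measurable w) (hφ : Measurable φ)
    (P : Kernel X ℝ≥0) [IsMarkovKernel P]
    (h : X → ℝ≥0∞) (hh : Measurable h)
    (hrn : ∀ Δ : Set X, MeasurableSet Δ →
      (μ.withDensity fun x => (‖w x‖₊ : ℝ≥0∞) ^ 2) (φ ⁻¹' Δ) = ∫⁻ x in Δ, h x ∂μ)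
    (hfin : ∀ᵐ x ∂μ, h x < ⊤)
    (hCC : ∀ σ : Set ℝ≥0, MeasurableSet σ → ∀ Δ : Set X, MeasurableSet Δ →
      ∫⁻ x in φ ⁻¹' Δ, (P x) σ ∂(μ.withDensity fun x => (‖w x‖₊ : ℝ≥0∞) ^ 2)
        = ∫⁻ x in φ ⁻¹' Δ, (∫⁻ t in σ, (t : ℝ≥0∞) ∂(P (φ x))) / h (φ x)
            ∂(μ.withDensity fun x => (‖w x‖₊ : ℝ≥0∞) ^ 2)) :
    List.TFAE
      [∀ᵐ x ∂(μ.withDensity fun x => (‖w x‖₊ : ℝ≥0∞) ^ 2),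
          h x = 0 → ∫⁻ t, (t : ℝ≥0∞) ∂(P x) = 0,
       ∀ᵐ x ∂(μ.withDensity fun x => (‖w x‖₊ : ℝ≥0∞) ^ 2),
          h x = 0 → P x = Measure.dirac 0,
       ∀ᵐ x ∂(μ.withDensity fun x => (‖w x‖₊ : ℝ≥0∞) ^ 2), 0 < h x] := by
  have hP0 : ∀ᵐ x ∂(μ.withDensity fun x => (‖w x‖₊ : ℝ≥0∞) ^ 2), (P x) {0} = 0 := by
    have hcc := hCC {0} (measurableSet_singleton 0) univ MeasurableSet.univ
    have hz : ∀ x, ∫⁻ t in ({0} : Set ℝ≥0), (t : ℝ≥0∞) ∂(P x) = 0 := fun x => by simp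
    simp only [hz, ENNReal.zero_div, lintegral_zero, preimage_univ, Measure.restrict_univ] at hcc
    exact (lintegral_eq_zero_iff (P.measurable_coe (measurableSet_singleton 0))).1 hcc
  tfae_have 1 → 2 := fun H => by
    filter_upwards [H] with x hx h0
    exact eq_dirac_zero_of_lintegral_eq_zero (P x) (hx h0)
  tfae_have 2 → 3 := fun H => by
    filter_upwards [H, hP0] with x hx hx0
    refine pos_iff_ne_zero.2 fun h0 => ?_
    simp [hx h0] at hx0
  tfae_have 3 → 1 := fun H => by
    filter_upwards [H] with x hx h0
    exact absurd h0 hx.ne'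
  tfae_finish
end

section
/- Suppose μ_w ∘ φ⁻¹ ≪ μ with Radon–Nikodym derivative h, h < ∞ a.e. [μ], h > 0 a.e. [μ_w], and the consistency condition (CC) holds. Then ρ_W ∘ Φ⁻¹ ≪ ρ, and the Radon–Nikodym derivative H of ρ_W ∘ Φ⁻¹ with respect to ρ satisfies H(x,t) = t for ρ_W-a.e. (x,t) ∈ X × [0,∞) and H ∘ Φ = H a.e. [ρ_W]. (By the quasinormality characterization h_{Φ,W} ∘ Φ = h_{Φ,W} a.e. [ρ_W], this means the weighted composition operator C_{Φ,W} in L²(ρ) is a quasinormal extension of C_{φ,w}, whence C_{φ,w} is subnormal.) -/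
/-!
Write `μ_w = |w|² μ` and `ρ = μ ⊗ₘ P`. Since `|w|²` does not depend on the second coordinate,
`ρ_W = μ_w ⊗ₘ P`, so the left side of (CC) is the mass that `ρ_W ∘ Φ⁻¹` gives to the rectangle
`Δ ×ˢ σ`. A change of variables along `φ` turns the right side into
`∫_Δ (∫_σ t P(y,dt)) / h(y) · h(y) dμ(y)`, which is the integral of the density
`D(y,t) = 1_{h(y) ≠ 0} t` over the same rectangle. Rectangles form a π-system and
`ρ_W ∘ Φ⁻¹` is finite on a countable cover by rectangles because `h < ∞` a.e. `[μ]`; hence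
`ρ_W ∘ Φ⁻¹ = D ρ` (`map_withDensity_eq_wcoDensity`).

Uniqueness of densities for the σ-finite measure `ρ` gives `H = D` a.e. `[ρ]`. As `h > 0` a.e.
`[μ_w]`, `D(x,t) = t` a.e. `[ρ_W]`. Moreover `μ_w (φ⁻¹{h = 0}) = ∫_{h = 0} h dμ = 0`, so
`D(φ(x),t) = t` a.e. `[ρ_W]` as well, while `H ∘ Φ = D ∘ Φ` a.e. `[ρ_W]` because
`ρ_W ∘ Φ⁻¹ ≪ ρ`.
-/

open MeasureTheory Set ProbabilityTheory
open scoped ENNReal NNReal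

/-- The density `1_{h(x) ≠ 0} t` of `ρ_W ∘ Φ⁻¹` with respect to `ρ`. The indicator is
there because (CC) gives `(∫_σ t P(x,dt)) / h(x) * h(x)`, which is `0`, not `∫_σ t P(x,dt)`, where
`h` vanishes. -/
noncomputable def wcoDensity {X : Type*} (h : X → ℝ≥0∞) (p : X × ℝ≥0) : ℝ≥0∞ :=
  {p : X × ℝ≥0 | h p.1 ≠ 0}.indicator (fun p => (p.2 : ℝ≥0∞)) p

lemma wcoDensity_of_ne_zero {X : Type*} {h : X → ℝ≥0∞} {p : X × ℝ≥0} (hp : h p.1 ≠ 0) :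
    wcoDensity h p = p.2 :=
  indicator_of_mem (s := {p : X × ℝ≥0 | h p.1 ≠ 0}) hp _

lemma wcoDensity_of_eq_zero {X : Type*} {h : X → ℝ≥0∞} {p : X × ℝ≥0} (hp : h p.1 = 0) :
    wcoDensity h p = 0 :=
  indicator_of_notMem (s := {p : X × ℝ≥0 | h p.1 ≠ 0}) (fun hne => hne hp) _

lemma measurable_wcoDensity {X : Type*} [MeasurableSpace X] {h : X → ℝ≥0∞} (hh : Measurable h) :
    Measurable (wcoDensity h) := by
  have hs : MeasurableSet {p : X × ℝ≥0 | h p.1 ≠ 0} :=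
    (hh.comp measurable_fst) (measurableSet_singleton 0).compl
  exact (measurable_snd.coe_nnreal_ennreal).indicator hs

lemma withDensity_fst_compProd {X : Type*} [MeasurableSpace X] (μ : Measure X) [SFinite μ]
    (P : Kernel X ℝ≥0) [IsMarkovKernel P] {f : X → ℝ≥0∞} (hf : Measurable f) :
    (μ.compProd P).withDensity (fun p => f p.1) = (μ.withDensity f).compProd P := by
  ext E hE
  have hf1 : Measurable fun p : X × ℝ≥0 => f p.1 := hf.comp measurable_fst
  rw [withDensity_apply _ hE, ← lintegral_indicator hE,
    Measure.lintegral_compProd (hf1.indicator hE), Measure.compProd_apply hE,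
    lintegral_withDensity_eq_lintegral_mul _ hf (Kernel.measurable_kernel_prodMk_left hE)]
  refine lintegral_congr fun x => ?_
  rw [Pi.mul_apply, ← lintegral_indicator_const (measurable_prodMk_left hE)]
  rfl

lemma sigmaFinite_compProd {X : Type*} [MeasurableSpace X] (μ : Measure X) [SigmaFinite μ]
    (P : Kernel X ℝ≥0) [IsMarkovKernel P] : SigmaFinite (μ.compProd P) := by
  have hfst : SigmaFinite ((μ.compProd P).map Prod.fst) := by
    change SigmaFinite (μ.compProd P).fst
    rw [Measure.fst_compProd]
    infer_instance
  exact SigmaFinite.of_map _ measurable_fst.aemeasurable hfst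

/-- (CC), read on rectangles, identifies `ρ_W ∘ Φ⁻¹`: here `ν` plays the role of `μ_w`, and
`hmap` says that `h` is the density of `μ_w ∘ φ⁻¹`. -/
lemma map_withDensity_eq_wcoDensity {X : Type*} [MeasurableSpace X] (μ ν : Measure X)
    [SigmaFinite μ] [SFinite ν] {φ : X → X} (hφ : Measurable φ)
    (P : Kernel X ℝ≥0) [IsMarkovKernel P] {h : X → ℝ≥0∞} (hh : Measurable h)
    (hmap : ν.map φ = μ.withDensity h) (hfin : ∀ᵐ x ∂μ, h x < ⊤)
    (hCC : ∀ σ : Set ℝ≥0, MeasurableSet σ → ∀ Δ : Set X, MeasurableSet Δ →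
      ∫⁻ x in φ ⁻¹' Δ, (P x) σ ∂ν
        = ∫⁻ x in φ ⁻¹' Δ, (∫⁻ t in σ, (t : ℝ≥0∞) ∂(P (φ x))) / h (φ x) ∂ν) :
    (ν.compProd P).map (fun p : X × ℝ≥0 => (φ p.1, p.2))
      = (μ.compProd P).withDensity (wcoDensity h) := by
  have hΦ : Measurable fun p : X × ℝ≥0 => (φ p.1, p.2) := by fun_prop
  have hσf : SigmaFinite (μ.withDensity h) :=
    SigmaFinite.withDensity_of_ne_top (hfin.mono fun _ hx => hx.ne)
  have hrect : ∀ Δ : Set X, MeasurableSet Δ → ∀ σ : Set ℝ≥0, MeasurableSet σ →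
      (ν.compProd P).map (fun p : X × ℝ≥0 => (φ p.1, p.2)) (Δ ×ˢ σ)
        = ∫⁻ x in φ ⁻¹' Δ, P x σ ∂ν := by
    intro Δ hΔ σ hσ
    rw [Measure.map_apply hΦ (hΔ.prod hσ), ← Measure.compProd_apply_prod (hφ hΔ) hσ]
    rfl
  refine Measure.ext_of_generateFrom_of_iUnion _
    (fun n => spanningSets (μ.withDensity h) n ×ˢ (univ : Set ℝ≥0)) generateFrom_prod.symm
    isPiSystem_prod ?_ ?_ ?_ ?_
  · rw [← iUnion_prod_const, iUnion_spanningSets, univ_prod_univ]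
  · exact fun n => ⟨_, measurableSet_spanningSets _ n, univ, by simp, rfl⟩
  · intro n
    have hn := measurableSet_spanningSets (μ.withDensity h) n
    rw [hrect _ hn _ MeasurableSet.univ]
    simp only [measure_univ, lintegral_one, Measure.restrict_apply_univ]
    rw [← Measure.map_apply hφ hn, hmap]
    exact (measure_spanningSets_lt_top _ n).ne
  · rintro _ ⟨Δ, hΔ, σ, hσ, rfl⟩
    replace hΔ : MeasurableSet Δ := hΔ
    replace hσ : MeasurableSet σ := hσ
    have hg : Measurable fun y => ∫⁻ t in σ, (t : ℝ≥0∞) ∂(P y) :=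
      Measurable.setLIntegral_kernel measurable_coe_nnreal_ennreal hσ
    have hq : Measurable fun y => (∫⁻ t in σ, (t : ℝ≥0∞) ∂(P y)) / h y := hg.div hh
    have hchange := setLIntegral_map (μ := ν) hΔ hq hφ
    rw [hrect Δ hΔ σ hσ, hCC σ hσ Δ hΔ, ← hchange, hmap, restrict_withDensity hΔ,
      lintegral_withDensity_eq_lintegral_mul _ hh hq, withDensity_apply _ (hΔ.prod hσ),
      Measure.setLIntegral_compProd (measurable_wcoDensity hh) hΔ hσ]
    refine lintegral_congr_ae ?_
    filter_upwards [ae_restrict_of_ae hfin] with y hy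
    rw [Pi.mul_apply]
    rcases eq_or_ne (h y) 0 with h0 | h0
    · have hD : ∀ t : ℝ≥0, wcoDensity h (y, t) = 0 := fun t => wcoDensity_of_eq_zero h0
      simp [hD, h0]
    · have hD : ∀ t : ℝ≥0, wcoDensity h (y, t) = t := fun t => wcoDensity_of_ne_zero h0
      simp only [hD]
      exact ENNReal.mul_div_cancel h0 hy.ne

/-- Under the consistency condition (CC) and `h > 0` a.e. `[μ_w]`,
`ρ_W ∘ Φ⁻¹ ≪ ρ` and any Radon–Nikodym derivative `H` of `ρ_W ∘ Φ⁻¹` with respect to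
`ρ` satisfies `H(x,t) = t` `ρ_W`-a.e. and `H ∘ Φ = H` a.e. `[ρ_W]` (so that `C_{Φ,W}`
is a quasinormal extension of `C_{φ,w}`, whence `C_{φ,w}` is subnormal). -/
theorem wco_cc_quasinormal_extension
    {X : Type*} [MeasurableSpace X] (μ : Measure X) [SigmaFinite μ]
    (w : X → ℂ) (φ : X → X) (hw : Measurable w) (hφ : Measurable φ)
    (P : Kernel X ℝ≥0) [IsMarkovKernel P]
    (h : X → ℝ≥0∞) (hh : Measurable h)
    (hrn : ∀ Δ : Set X, MeasurableSet Δ →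
      (μ.withDensity fun x => (‖w x‖₊ : ℝ≥0∞) ^ 2) (φ ⁻¹' Δ) = ∫⁻ x in Δ, h x ∂μ)
    (hfin : ∀ᵐ x ∂μ, h x < ⊤)
    (hpos : ∀ᵐ x ∂(μ.withDensity fun x => (‖w x‖₊ : ℝ≥0∞) ^ 2), 0 < h x)
    (hCC : ∀ σ : Set ℝ≥0, MeasurableSet σ → ∀ Δ : Set X, MeasurableSet Δ →
      ∫⁻ x in φ ⁻¹' Δ, (P x) σ ∂(μ.withDensity fun x => (‖w x‖₊ : ℝ≥0∞) ^ 2)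
        = ∫⁻ x in φ ⁻¹' Δ, (∫⁻ t in σ, (t : ℝ≥0∞) ∂(P (φ x))) / h (φ x)
            ∂(μ.withDensity fun x => (‖w x‖₊ : ℝ≥0∞) ^ 2)) :
    Measure.map (fun p : X × ℝ≥0 => (φ p.1, p.2))
        ((μ.compProd P).withDensity fun p => (‖w p.1‖₊ : ℝ≥0∞) ^ 2) ≪ μ.compProd P ∧
    ∀ H : X × ℝ≥0 → ℝ≥0∞, Measurable H →
      (∀ E : Set (X × ℝ≥0), MeasurableSet E →
        (Measure.map (fun p : X × ℝ≥0 => (φ p.1, p.2))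
          ((μ.compProd P).withDensity fun p => (‖w p.1‖₊ : ℝ≥0∞) ^ 2)) E
          = ∫⁻ p in E, H p ∂(μ.compProd P)) →
      ((H =ᵐ[(μ.compProd P).withDensity fun p => (‖w p.1‖₊ : ℝ≥0∞) ^ 2]
          fun p => (p.2 : ℝ≥0∞)) ∧
        ((fun p : X × ℝ≥0 => H (φ p.1, p.2))
          =ᵐ[(μ.compProd P).withDensity fun p => (‖w p.1‖₊ : ℝ≥0∞) ^ 2] H)) := by
  have hw2 : Measurable fun x => (‖w x‖₊ : ℝ≥0∞) ^ 2 := by fun_prop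
  have hσρ := sigmaFinite_compProd μ P
  have hΦ : Measurable fun p : X × ℝ≥0 => (φ p.1, p.2) := by fun_prop
  have hD := measurable_wcoDensity hh
  rw [withDensity_fst_compProd μ P hw2]
  set ν := μ.withDensity fun x => (‖w x‖₊ : ℝ≥0∞) ^ 2 with hν
  have hmap : ν.map φ = μ.withDensity h := by
    ext Δ hΔ
    rw [Measure.map_apply hφ hΔ, hrn Δ hΔ, withDensity_apply _ hΔ]
  have key := map_withDensity_eq_wcoDensity μ ν hφ P hh hmap hfin hCC
  have hac : (ν.compProd P).map (fun p : X × ℝ≥0 => (φ p.1, p.2)) ≪ μ.compProd P :=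
    key ▸ withDensity_absolutelyContinuous _ _
  refine ⟨hac, fun H hH hHrn => ?_⟩
  have hHD : H =ᵐ[μ.compProd P] wcoDensity h := by
    refine ae_eq_of_forall_setLIntegral_eq_of_sigmaFinite hH hD fun E hE _ => ?_
    rw [← hHrn E hE, key, withDensity_apply _ hE]
  have hne : MeasurableSet {x | h x ≠ 0} := hh (measurableSet_singleton 0).compl
  have hpos_fst : ∀ᵐ p ∂(ν.compProd P), h p.1 ≠ 0 :=
    Measure.ae_compProd_of_ae_fst P hne (hpos.mono fun _ hx => hx.ne')
  have hpos_map : ∀ᵐ x ∂ν, h (φ x) ≠ 0 := by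
    refine ae_of_ae_map hφ.aemeasurable (p := fun y => h y ≠ 0) ?_
    rw [hmap, ae_withDensity_iff hh]
    exact Filter.Eventually.of_forall fun _ hx => hx
  have hpos_Φ : ∀ᵐ p ∂(ν.compProd P), h (φ p.1) ≠ 0 :=
    Measure.ae_compProd_of_ae_fst P (hφ hne) hpos_map
  have hac_ν : ν.compProd P ≪ μ.compProd P :=
    (withDensity_absolutelyContinuous _ _).compProd_left P
  have hH_snd : H =ᵐ[ν.compProd P] fun p => (p.2 : ℝ≥0∞) := by
    filter_upwards [hac_ν.ae_eq hHD, hpos_fst] with p hp h0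
    rw [hp, wcoDensity_of_ne_zero h0]
  refine ⟨hH_snd, ?_⟩
  filter_upwards [hH_snd, ae_of_ae_map hΦ.aemeasurable (hac.ae_eq hHD), hpos_Φ] with p hp hpΦ h0
  rw [hp, hpΦ, wcoDensity_of_ne_zero (p := (φ p.1, p.2)) h0]
end
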